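/- Let m, p, n, s, k be natural numbers with n < p, k > 2·p and k > 2·s, set t = s, let a, b ∈ ℂ with a ≠ 0 and b ≠ 0, and let φ(z) = a·z^p·conj(z)^n + b·z^s·conj(z)^t. If ⟨T_φ(T_φ (w ↦ w^k)), T_φ (w ↦ w^k)⟩ = ⟨T_{conj∘φ}(T_φ (w ↦ w^k)), T_{conj∘φ} (w ↦ w^k)⟩, then (s+k+m)!·(k+m+n)!²/((k+m)!·(k+n+m−p)!) = (p+k+m)!²·(p+k+m+s−n)!/((p+k+m−n)!)². -/

import Mathlib

/-!
The integral `∫ z ^ i * conj z ^ j * |z| ^ (2 m) * exp (-|z|²)` equals `π (i + m)!` when `i = j`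
and `0` otherwise (`integral_monomial`). Termwise integration of the kernel series, justified by
domination, then gives `T_ψ w ^ e = (p + e + m)! / (p + e - n + m)! * z ^ (p + e - n)` for
`ψ = z ^ p * conj z ^ n` (`integral_monomial_kernel`, `fsToeplitz_two_terms`).

Put `D = p - n > 0`, and write
`T_φ z ^ k = a A z ^ (k + D) + b B z ^ k` and
`T_{conj φ} z ^ k = conj a C z ^ (k - D) + conj b B z ^ k`, with `B'` the value of `B` at `k + D`.
Expanding both pairings by orthogonality, the `|b|² b` terms coincide, and so do the terms
`|a|² b A² B (k + D + m)!`. What is left, after division by `π |a|² b`, is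
`A² B' (k + D + m)! = B C² (k - D + m)!`, which is the claimed identity of factorials.
-/

open MeasureTheory Complex ComplexOrder

/-- Weight function: `|z|^{2m} e^{-|z|^2}` as a complex number. -/
noncomputable def fsWt (m : ℕ) (z : ℂ) : ℂ :=
  ((‖z‖ : ℝ) : ℂ) ^ (2 * m) * ((Real.exp (-‖z‖ ^ 2) : ℝ) : ℂ)

/-- Fock–Sobolev reproducing kernel `K_m(z,w)`. -/
noncomputable def fsKernel (m : ℕ) (z w : ℂ) : ℂ :=
  ∑' j : ℕ, ((m.factorial : ℂ) / ((j + m).factorial : ℂ)) * (z * starRingEnd ℂ w) ^ j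

/-- Toeplitz operator with symbol `ψ` acting on `f`, evaluated at `z`. -/
noncomputable def fsToeplitz (m : ℕ) (ψ f : ℂ → ℂ) (z : ℂ) : ℂ :=
  (1 / ((Real.pi : ℂ) * (m.factorial : ℂ))) *
    ∫ w : ℂ, ψ w * f w * fsKernel m z w * fsWt m w

/-- Fock–Sobolev pairing `⟨g, h⟩`. -/
noncomputable def fsPair (m : ℕ) (g h : ℂ → ℂ) : ℂ :=
  ∫ z : ℂ, g z * starRingEnd ℂ (h z) * fsWt m z

/-- `‖g‖² = ⟨g, g⟩`. -/
noncomputable def fsNormSq (m : ℕ) (g : ℂ → ℂ) : ℂ := fsPair m g g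

lemma integral_norm_pow_mul_exp (N : ℕ) {c : ℝ} (hc : 0 < c) :
    ∫ w : ℂ, ‖w‖ ^ N * Real.exp (-c * ‖w‖ ^ 2)
      = Real.pi * c ^ (-((N : ℝ) + 2) / 2) * Real.Gamma (((N : ℝ) + 2) / 2) := by
  have h := Complex.integral_rpow_mul_exp_neg_mul_rpow (p := 2) (q := (N : ℝ)) (b := c)
    (by norm_num) (by have : (0 : ℝ) ≤ N := Nat.cast_nonneg N
                      linarith) hc
  simp only [Real.rpow_natCast, Real.rpow_ofNat] at h
  rw [h]
  ring

lemma integrable_norm_pow_mul_exp (N : ℕ) {c : ℝ} (hc : 0 < c) :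
    Integrable (fun w : ℂ => ‖w‖ ^ N * Real.exp (-c * ‖w‖ ^ 2)) := by
  apply Integrable.of_integral_ne_zero
  rw [integral_norm_pow_mul_exp N hc]
  have : 0 < Real.Gamma (((N : ℝ) + 2) / 2) := Real.Gamma_pos_of_pos (by positivity)
  positivity

lemma continuous_fsWt (m : ℕ) : Continuous (fsWt m) := by
  unfold fsWt
  fun_prop

lemma norm_fsWt (m : ℕ) (z : ℂ) : ‖fsWt m z‖ = ‖z‖ ^ (2 * m) * Real.exp (-‖z‖ ^ 2) := by
  simp only [fsWt, norm_mul, norm_pow, Complex.norm_real, norm_norm,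
    Real.norm_of_nonneg (Real.exp_pos _).le]

lemma integrable_monomial (m i j : ℕ) :
    Integrable (fun z : ℂ => z ^ i * (starRingEnd ℂ z) ^ j * fsWt m z) := by
  refine (integrable_norm_pow_mul_exp (i + j + 2 * m) one_pos).mono' ?_ ?_
  · exact ((by fun_prop : Continuous fun z : ℂ => z ^ i * (starRingEnd ℂ z) ^ j).mul
      (continuous_fsWt m)).aestronglyMeasurable
  · refine Filter.Eventually.of_forall fun z => le_of_eq ?_
    simp only [norm_mul, norm_pow, RCLike.norm_conj, norm_fsWt]
    ring_nf

/-- Rotating by `exp (iπ / (i - j))` changes the sign of the monomial and preserves the weight, so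
the integral equals its own negative. -/
lemma integral_monomial_of_ne (m : ℕ) {i j : ℕ} (hij : i ≠ j) :
    ∫ z : ℂ, z ^ i * (starRingEnd ℂ z) ^ j * fsWt m z = 0 := by
  set θ : ℝ := Real.pi / ((i : ℝ) - j) with hθ
  have hsub : (i : ℝ) - j ≠ 0 := sub_ne_zero.2 (by exact_mod_cast hij)
  have hsign : ((Circle.exp θ : Circle) : ℂ) ^ i * (starRingEnd ℂ (Circle.exp θ : ℂ)) ^ j = -1 := by
    rw [← Circle.coe_inv_eq_conj, ← Circle.exp_neg, Circle.coe_exp, Circle.coe_exp,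
      ← Complex.exp_nat_mul, ← Complex.exp_nat_mul, ← Complex.exp_add, ← Complex.exp_pi_mul_I]
    congr 1
    have : (θ : ℂ) * ((i : ℂ) - j) = Real.pi := by
      have : θ * ((i : ℝ) - j) = Real.pi := by rw [hθ]; field_simp
      exact_mod_cast congrArg (fun x : ℝ => (x : ℂ)) this
    rw [← this]
    push_cast
    ring
  have h := (rotation (Circle.exp θ)).measurePreserving.integral_comp
    (rotation (Circle.exp θ)).toHomeomorph.measurableEmbedding
    (fun z : ℂ => z ^ i * (starRingEnd ℂ z) ^ j * fsWt m z)
  have h2 : ∀ z : ℂ, (rotation (Circle.exp θ) z) ^ i *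
      (starRingEnd ℂ (rotation (Circle.exp θ) z)) ^ j * fsWt m (rotation (Circle.exp θ) z)
      = -(z ^ i * (starRingEnd ℂ z) ^ j * fsWt m z) := by
    intro z
    have hw : fsWt m (rotation (Circle.exp θ) z) = fsWt m z := by
      simp only [fsWt, LinearIsometryEquiv.norm_map]
    rw [hw, rotation_apply, map_mul, mul_pow, mul_pow]
    linear_combination (z ^ i * (starRingEnd ℂ z) ^ j * fsWt m z) * hsign
  simp only [h2, integral_neg] at h
  exact self_eq_neg.1 h.symm

lemma integral_monomial_diag (m i : ℕ) :
    ∫ z : ℂ, z ^ i * (starRingEnd ℂ z) ^ i * fsWt m z = Real.pi * ((i + m).factorial : ℂ) := by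
  have h := integral_norm_pow_mul_exp (2 * (i + m)) one_pos
  have hg : (((2 * (i + m) : ℕ) : ℝ) + 2) / 2 = ((i + m : ℕ) : ℝ) + 1 := by push_cast; ring
  rw [hg, Real.Gamma_nat_eq_factorial, Real.one_rpow, mul_one] at h
  have h2 : ∀ z : ℂ, z ^ i * (starRingEnd ℂ z) ^ i * fsWt m z
      = ((‖z‖ ^ (2 * (i + m)) * Real.exp (-1 * ‖z‖ ^ 2) : ℝ) : ℂ) := by
    intro z
    rw [← mul_pow, Complex.mul_conj, Complex.normSq_eq_norm_sq, fsWt]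
    push_cast
    ring_nf
  simp only [h2]
  rw [integral_complex_ofReal, h]
  push_cast
  rfl

lemma integral_monomial (m i j : ℕ) :
    ∫ z : ℂ, z ^ i * (starRingEnd ℂ z) ^ j * fsWt m z
      = if i = j then Real.pi * ((i + m).factorial : ℂ) else 0 := by
  split_ifs with h
  · subst h
    exact integral_monomial_diag m i
  · exact integral_monomial_of_ne m h

lemma norm_kernel_term_le (m l : ℕ) (z w : ℂ) :
    ‖((m.factorial : ℂ) / ((l + m).factorial : ℂ)) * (z * starRingEnd ℂ w) ^ l‖
      ≤ (‖z‖ * ‖w‖) ^ l / l.factorial := by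
  have hle : ((m.factorial : ℝ) / ((l + m).factorial : ℝ)) ≤ 1 / l.factorial := by
    rw [div_le_div_iff₀ (by positivity) (by positivity), one_mul, mul_comm]
    exact_mod_cast Nat.le_of_dvd (Nat.factorial_pos _)
      (Nat.factorial_mul_factorial_dvd_factorial_add l m)
  simp only [norm_mul, norm_pow, norm_div, RCLike.norm_conj, RCLike.norm_natCast]
  calc _ ≤ 1 / (l.factorial : ℝ) * (‖z‖ * ‖w‖) ^ l := by gcongr
    _ = _ := by ring

lemma hasSum_exp_real (x : ℝ) : HasSum (fun l : ℕ => x ^ l / l.factorial) (Real.exp x) := by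
  rw [Real.exp_eq_exp_ℝ]
  exact NormedSpace.expSeries_div_hasSum_exp x

lemma hasSum_fsKernel (m : ℕ) (z w : ℂ) :
    HasSum (fun l : ℕ => ((m.factorial : ℂ) / ((l + m).factorial : ℂ)) * (z * starRingEnd ℂ w) ^ l)
      (fsKernel m z w) :=
  (Summable.of_norm_bounded (hasSum_exp_real (‖z‖ * ‖w‖)).summable
    fun l => norm_kernel_term_le m l z w).hasSum

lemma norm_fsKernel_le (m : ℕ) (z w : ℂ) : ‖fsKernel m z w‖ ≤ Real.exp (‖z‖ * ‖w‖) :=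
  tsum_of_norm_bounded (hasSum_exp_real (‖z‖ * ‖w‖)) fun l => norm_kernel_term_le m l z w

lemma measurable_fsKernel (m : ℕ) (z : ℂ) : Measurable (fsKernel m z) := by
  unfold fsKernel
  refine Measurable.tsum fun l => Continuous.measurable ?_
  fun_prop

/-- `‖w‖ ^ N * exp (‖z‖ ‖w‖) * exp (-‖w‖²)` is integrable, because
`‖z‖ ‖w‖ ≤ ‖z‖² + ‖w‖² / 4`. -/
lemma integrable_majorant (N : ℕ) (z : ℂ) :
    Integrable (fun w : ℂ => ‖w‖ ^ N * Real.exp (‖z‖ * ‖w‖) * Real.exp (-‖w‖ ^ 2)) := by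
  refine ((integrable_norm_pow_mul_exp N (c := 3 / 4) (by norm_num)).const_mul
    (Real.exp (‖z‖ ^ 2))).mono' (Continuous.aestronglyMeasurable (by fun_prop)) ?_
  refine Filter.Eventually.of_forall fun w => ?_
  rw [Real.norm_of_nonneg (by positivity), mul_assoc, ← Real.exp_add, mul_left_comm, ← Real.exp_add]
  refine mul_le_mul_of_nonneg_left (Real.exp_le_exp.2 ?_) (by positivity)
  nlinarith [sq_nonneg (‖z‖ - ‖w‖ / 2)]

lemma integrable_monomial_kernel (m i j : ℕ) (z : ℂ) :
    Integrable (fun w : ℂ => w ^ i * (starRingEnd ℂ w) ^ j * fsKernel m z w * fsWt m w) := by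
  refine (integrable_majorant (i + j + 2 * m) z).mono' ?_ ?_
  · refine Measurable.aestronglyMeasurable (Measurable.mul (Measurable.mul ?_
      (measurable_fsKernel m z)) (continuous_fsWt m).measurable)
    exact Continuous.measurable (by fun_prop)
  · refine Filter.Eventually.of_forall fun w => ?_
    simp only [norm_mul, norm_pow, RCLike.norm_conj, norm_fsWt]
    calc _ ≤ ‖w‖ ^ i * ‖w‖ ^ j * Real.exp (‖z‖ * ‖w‖) * (‖w‖ ^ (2 * m) * Real.exp (-‖w‖ ^ 2)) := by
          gcongr
          exact norm_fsKernel_le m z w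
      _ = _ := by ring

/-- Integrating the kernel series termwise, orthogonality keeps only the term of index
`x = i - j`. -/
lemma integral_monomial_kernel (m : ℕ) {i j x : ℕ} (hij : i = j + x) (z : ℂ) :
    ∫ w : ℂ, w ^ i * (starRingEnd ℂ w) ^ j * fsKernel m z w * fsWt m w
      = Real.pi * m.factorial *
        (((i + m).factorial : ℂ) / ((x + m).factorial : ℂ) * z ^ x) := by
  have hsum := hasSum_integral_of_dominated_convergence (μ := (volume : Measure ℂ))
    (F := fun (l : ℕ) (w : ℂ) => w ^ i * (starRingEnd ℂ w) ^ j *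
      (((m.factorial : ℂ) / ((l + m).factorial : ℂ)) * (z * starRingEnd ℂ w) ^ l) * fsWt m w)
    (f := fun w => w ^ i * (starRingEnd ℂ w) ^ j * fsKernel m z w * fsWt m w)
    (fun l w => ‖w‖ ^ (i + j + 2 * m) * ((‖z‖ * ‖w‖) ^ l / l.factorial) * Real.exp (-‖w‖ ^ 2))
    ?_ ?_ ?_ ?_ ?_
  · have hterm : ∀ l : ℕ, ∫ w : ℂ, w ^ i * (starRingEnd ℂ w) ^ j *
        (((m.factorial : ℂ) / ((l + m).factorial : ℂ)) * (z * starRingEnd ℂ w) ^ l) * fsWt m w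
        = ((m.factorial : ℂ) / ((l + m).factorial : ℂ)) * z ^ l *
          (if i = j + l then Real.pi * ((i + m).factorial : ℂ) else 0) := by
      intro l
      rw [← integral_monomial, ← integral_const_mul]
      congr 1
      ext w
      ring
    simp only [hterm] at hsum
    refine hsum.unique ?_
    have hs := hasSum_single (f := fun l : ℕ =>
      ((m.factorial : ℂ) / ((l + m).factorial : ℂ)) * z ^ l *
          (if i = j + l then Real.pi * ((i + m).factorial : ℂ) else 0)) x
      (fun l hl => by rw [if_neg (by omega), mul_zero])
    rw [if_pos hij] at hs
    rw [show (Real.pi : ℂ) * m.factorial * (((i + m).factorial : ℂ) / ((x + m).factorial : ℂ) * z ^ x)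
      = (m.factorial : ℂ) / ((x + m).factorial : ℂ) * z ^ x * (Real.pi * ((i + m).factorial : ℂ)) by
      ring]
    exact hs
  · intro l
    exact ((by fun_prop : Continuous fun w : ℂ => w ^ i * (starRingEnd ℂ w) ^ j *
      (((m.factorial : ℂ) / ((l + m).factorial : ℂ)) * (z * starRingEnd ℂ w) ^ l)).mul
      (continuous_fsWt m)).aestronglyMeasurable
  · intro l
    refine Filter.Eventually.of_forall fun w => ?_
    rw [norm_mul, norm_mul, norm_fsWt, norm_mul, norm_pow, norm_pow, RCLike.norm_conj]
    calc _ ≤ ‖w‖ ^ i * ‖w‖ ^ j * ((‖z‖ * ‖w‖) ^ l / l.factorial) *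
          (‖w‖ ^ (2 * m) * Real.exp (-‖w‖ ^ 2)) := by
          gcongr
          exact norm_kernel_term_le m l z w
      _ = _ := by ring
  · exact Filter.Eventually.of_forall fun w =>
      (((hasSum_exp_real (‖z‖ * ‖w‖)).mul_left _).mul_right _).summable
  · refine (integrable_majorant (i + j + 2 * m) z).congr (Filter.Eventually.of_forall fun w => ?_)
    exact (((hasSum_exp_real (‖z‖ * ‖w‖)).mul_left _).mul_right _).tsum_eq.symm
  · exact Filter.Eventually.of_forall fun w => ((hasSum_fsKernel m z w).mul_left _).mul_right _

/-- A symbol `z ^ p * conj z ^ n` sends `w ^ e` to a multiple of `z ^ (p + e - n)`; the exponents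
`xᵢ` name these differences so that no truncated subtraction occurs. -/
lemma fsToeplitz_two_terms (m : ℕ) {p n s t e f x₁ x₂ x₃ x₄ : ℕ} (a b c d : ℂ)
    (h₁ : p + e = n + x₁) (h₂ : p + f = n + x₂) (h₃ : s + e = t + x₃) (h₄ : s + f = t + x₄) :
    fsToeplitz m (fun z => a * z ^ p * (starRingEnd ℂ z) ^ n + b * z ^ s * (starRingEnd ℂ z) ^ t)
        (fun w => c * w ^ e + d * w ^ f)
      = fun z =>
        a * c * (((p + e + m).factorial : ℂ) / ((x₁ + m).factorial : ℂ)) * z ^ x₁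
        + a * d * (((p + f + m).factorial : ℂ) / ((x₂ + m).factorial : ℂ)) * z ^ x₂
        + b * c * (((s + e + m).factorial : ℂ) / ((x₃ + m).factorial : ℂ)) * z ^ x₃
        + b * d * (((s + f + m).factorial : ℂ) / ((x₄ + m).factorial : ℂ)) * z ^ x₄ := by
  funext z
  have hπ : (Real.pi : ℂ) ≠ 0 := by exact_mod_cast Real.pi_ne_zero
  have hm : (m.factorial : ℂ) ≠ 0 := by exact_mod_cast m.factorial_ne_zero
  have hI : ∀ (q : ℂ) (i j : ℕ), Integrable
      (fun w : ℂ => q * (w ^ i * (starRingEnd ℂ w) ^ j * fsKernel m z w * fsWt m w)) :=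
    fun q i j => (integrable_monomial_kernel m i j z).const_mul q
  have hexp : (fun w : ℂ => (a * w ^ p * (starRingEnd ℂ w) ^ n + b * w ^ s * (starRingEnd ℂ w) ^ t)
        * (c * w ^ e + d * w ^ f) * fsKernel m z w * fsWt m w)
      = fun w => (a * c) * (w ^ (p + e) * (starRingEnd ℂ w) ^ n * fsKernel m z w * fsWt m w)
        + (a * d) * (w ^ (p + f) * (starRingEnd ℂ w) ^ n * fsKernel m z w * fsWt m w)
        + (b * c) * (w ^ (s + e) * (starRingEnd ℂ w) ^ t * fsKernel m z w * fsWt m w)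
        + (b * d) * (w ^ (s + f) * (starRingEnd ℂ w) ^ t * fsKernel m z w * fsWt m w) := by
    funext w
    ring
  unfold fsToeplitz
  rw [hexp, integral_add (((hI _ _ _).fun_add (hI _ _ _)).fun_add (hI _ _ _)) (hI _ _ _),
    integral_add ((hI _ _ _).fun_add (hI _ _ _)) (hI _ _ _), integral_add (hI _ _ _) (hI _ _ _)]
  simp only [integral_const_mul]
  rw [integral_monomial_kernel m h₁, integral_monomial_kernel m h₂, integral_monomial_kernel m h₃,
    integral_monomial_kernel m h₄]
  rw [one_div_mul_eq_div, div_eq_iff (mul_ne_zero hπ hm)]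
  ring

/-- The pairing of a combination of three monomials with a combination of two of them; the monomial
`z ^ e₃` is orthogonal to the other two. -/
lemma fsPair_three_two (m : ℕ) {e₁ e₂ e₃ : ℕ} (h₁₂ : e₁ ≠ e₂) (h₁₃ : e₁ ≠ e₃) (h₂₃ : e₂ ≠ e₃)
    (c₁ c₂ c₃ d₁ d₂ : ℂ) :
    fsPair m (fun z => c₁ * z ^ e₁ + c₂ * z ^ e₂ + c₃ * z ^ e₃)
        (fun z => d₁ * z ^ e₁ + d₂ * z ^ e₂)
      = Real.pi * (c₁ * starRingEnd ℂ d₁ * ((e₁ + m).factorial : ℂ)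
        + c₂ * starRingEnd ℂ d₂ * ((e₂ + m).factorial : ℂ)) := by
  have hI : ∀ (q : ℂ) (i j : ℕ), Integrable
      (fun z : ℂ => q * (z ^ i * (starRingEnd ℂ z) ^ j * fsWt m z)) :=
    fun q i j => (integrable_monomial m i j).const_mul q
  have hexp : (fun z : ℂ => (c₁ * z ^ e₁ + c₂ * z ^ e₂ + c₃ * z ^ e₃)
        * starRingEnd ℂ (d₁ * z ^ e₁ + d₂ * z ^ e₂) * fsWt m z)
      = fun z => (c₁ * starRingEnd ℂ d₁) * (z ^ e₁ * (starRingEnd ℂ z) ^ e₁ * fsWt m z)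
        + (c₁ * starRingEnd ℂ d₂) * (z ^ e₁ * (starRingEnd ℂ z) ^ e₂ * fsWt m z)
        + (c₂ * starRingEnd ℂ d₁) * (z ^ e₂ * (starRingEnd ℂ z) ^ e₁ * fsWt m z)
        + (c₂ * starRingEnd ℂ d₂) * (z ^ e₂ * (starRingEnd ℂ z) ^ e₂ * fsWt m z)
        + (c₃ * starRingEnd ℂ d₁) * (z ^ e₃ * (starRingEnd ℂ z) ^ e₁ * fsWt m z)
        + (c₃ * starRingEnd ℂ d₂) * (z ^ e₃ * (starRingEnd ℂ z) ^ e₂ * fsWt m z) := by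
    funext z
    simp only [map_add, map_mul, map_pow]
    ring
  unfold fsPair
  rw [hexp,
    integral_add (((((hI _ _ _).fun_add (hI _ _ _)).fun_add (hI _ _ _)).fun_add (hI _ _ _)).fun_add (hI _ _ _))
      (hI _ _ _),
    integral_add ((((hI _ _ _).fun_add (hI _ _ _)).fun_add (hI _ _ _)).fun_add (hI _ _ _)) (hI _ _ _),
    integral_add (((hI _ _ _).fun_add (hI _ _ _)).fun_add (hI _ _ _)) (hI _ _ _),
    integral_add ((hI _ _ _).fun_add (hI _ _ _)) (hI _ _ _), integral_add (hI _ _ _) (hI _ _ _)]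
  simp only [integral_const_mul, integral_monomial, h₁₂, h₁₂.symm, h₁₃.symm, h₂₃.symm, if_true,
    if_false]
  ring

theorem stmt18 (m p n s k t : ℕ) (hnp : n < p) (hk1 : k > 2 * p)
    (hk2 : k > 2 * s) (ht : t = s) (a b : ℂ) (ha : a ≠ 0) (hb : b ≠ 0)
    (φ : ℂ → ℂ) (hφ : φ = fun z => a * z ^ p * (starRingEnd ℂ z) ^ n + b * z ^ s * (starRingEnd ℂ z) ^ t)
    (hyp : fsPair m (fsToeplitz m φ (fsToeplitz m φ (fun w => w ^ k)))
        (fsToeplitz m φ (fun w => w ^ k)) =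
      fsPair m (fsToeplitz m (fun w => starRingEnd ℂ (φ w)) (fsToeplitz m φ (fun w => w ^ k)))
        (fsToeplitz m (fun w => starRingEnd ℂ (φ w)) (fun w => w ^ k))) :
    ((s + k + m).factorial : ℝ) * ((k + m + n).factorial : ℝ) ^ 2
        / (((k + m).factorial : ℝ) * ((k + n + m - p).factorial : ℝ)) =
      ((p + k + m).factorial : ℝ) ^ 2 * ((p + k + m + s - n).factorial : ℝ)
        / ((p + k + m - n).factorial : ℝ) ^ 2 := by
  subst ht
  -- `D = p - n` is the degree shift of `T_φ`, and `e = k - D`.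
  obtain ⟨D, rfl⟩ : ∃ D, p = n + D := ⟨p - n, by omega⟩
  have hD0 : D ≠ 0 := by omega
  obtain ⟨e, rfl⟩ : ∃ e, k = e + D := ⟨k - D, by omega⟩
  have hφc : (fun w => starRingEnd ℂ (φ w)) = fun z => starRingEnd ℂ a * z ^ n *
      (starRingEnd ℂ z) ^ (n + D) + starRingEnd ℂ b * z ^ t * (starRingEnd ℂ z) ^ t := by
    funext w
    simp only [hφ, map_add, map_mul, map_pow, Complex.conj_conj]
    ring
  have hmon : (fun w : ℂ => w ^ (e + D)) = fun w => 1 * w ^ (e + D) + 0 * w ^ (e + D) := by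
    funext w
    ring
  have hT : fsToeplitz m φ (fun w => w ^ (e + D)) = fun z =>
      (a * (((n + D + (e + D) + m).factorial : ℂ) / ((e + D + D + m).factorial : ℂ)))
        * z ^ (e + D + D)
      + (b * (((t + (e + D) + m).factorial : ℂ) / ((e + D + m).factorial : ℂ))) * z ^ (e + D) := by
    rw [hφ, hmon, fsToeplitz_two_terms m a b 1 0 (x₁ := e + D + D) (x₂ := e + D + D)
      (x₃ := e + D) (x₄ := e + D) (by omega) (by omega) (by omega) (by omega)]
    funext z
    ring
  have hTc : fsToeplitz m (fun w => starRingEnd ℂ (φ w)) (fun w => w ^ (e + D)) = fun z =>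
      (starRingEnd ℂ a * (((n + (e + D) + m).factorial : ℂ) / ((e + m).factorial : ℂ)))
        * z ^ e
      + (starRingEnd ℂ b * (((t + (e + D) + m).factorial : ℂ) / ((e + D + m).factorial : ℂ)))
        * z ^ (e + D) := by
    rw [hφc, hmon, fsToeplitz_two_terms m _ _ 1 0 (x₁ := e) (x₂ := e)
      (x₃ := e + D) (x₄ := e + D) (by omega) (by omega) (by omega) (by omega)]
    funext z
    ring
  set A : ℂ := ((n + D + (e + D) + m).factorial : ℂ) / ((e + D + D + m).factorial : ℂ) with hA
  set B : ℂ := ((t + (e + D) + m).factorial : ℂ) / ((e + D + m).factorial : ℂ) with hB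
  set C : ℂ := ((n + (e + D) + m).factorial : ℂ) / ((e + m).factorial : ℂ) with hC
  set A' : ℂ := ((n + D + (e + D + D) + m).factorial : ℂ) / ((e + D + D + D + m).factorial : ℂ)
  set B' : ℂ := ((t + (e + D + D) + m).factorial : ℂ) / ((e + D + D + m).factorial : ℂ) with hB'
  set C' : ℂ := ((n + (e + D + D) + m).factorial : ℂ) / ((e + D + m).factorial : ℂ) with hC'
  have hTT : fsToeplitz m φ (fsToeplitz m φ (fun w => w ^ (e + D))) = fun z =>
      (a * (b * B) * A + b * (a * A) * B') * z ^ (e + D + D) + (b * (b * B) * B) * z ^ (e + D)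
        + (a * (a * A) * A') * z ^ (e + D + D + D) := by
    rw [hT, hφ, fsToeplitz_two_terms m a b (a * A) (b * B) (x₁ := e + D + D + D)
      (x₂ := e + D + D) (x₃ := e + D + D) (x₄ := e + D)
      (by omega) (by omega) (by omega) (by omega)]
    funext z
    ring
  have hTcT : fsToeplitz m (fun w => starRingEnd ℂ (φ w)) (fsToeplitz m φ (fun w => w ^ (e + D)))
      = fun z => (starRingEnd ℂ a * (b * B) * C) * z ^ e
        + (starRingEnd ℂ a * (a * A) * C' + starRingEnd ℂ b * (b * B) * B) * z ^ (e + D)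
        + (starRingEnd ℂ b * (a * A) * B') * z ^ (e + D + D) := by
    rw [hT, hφc, fsToeplitz_two_terms m _ _ (a * A) (b * B) (x₁ := e + D)
      (x₂ := e) (x₃ := e + D + D) (x₄ := e + D)
      (by omega) (by omega) (by omega) (by omega)]
    funext z
    ring
  rw [hTT, hTcT, hT, hTc, fsPair_three_two m (by omega) (by omega) (by omega),
    fsPair_three_two m (by omega) (by omega) (by omega)] at hyp
  have hAc : starRingEnd ℂ A = A := by simp [hA]
  have hBc : starRingEnd ℂ B = B := by simp [hB]
  have hCc : starRingEnd ℂ C = C := by simp [hC]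
  have hπ : (Real.pi : ℂ) ≠ 0 := by exact_mod_cast Real.pi_ne_zero
  have hac : starRingEnd ℂ a ≠ 0 := by simpa using ha
  have hf : ∀ i : ℕ, (i.factorial : ℂ) ≠ 0 := fun i => by exact_mod_cast i.factorial_ne_zero
  simp only [map_mul, hAc, hBc, hCc, Complex.conj_conj] at hyp
  -- Both sides of this identity are `(p + k + m)!`.
  have hAC : A * ((e + D + D + m).factorial : ℂ) = C' * ((e + D + m).factorial : ℂ) := by
    rw [hA, hC', div_mul_cancel₀ _ (hf _), div_mul_cancel₀ _ (hf _)]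
    congr 2
    omega
  -- The `|b|² b` terms agree, and `|a|² b` factors out of the remaining ones.
  have key : A ^ 2 * B' * ((e + D + D + m).factorial : ℂ) = B * C ^ 2 * ((e + m).factorial : ℂ) := by
    refine mul_left_cancel₀ (mul_ne_zero (mul_ne_zero hπ (mul_ne_zero ha hac)) hb) ?_
    linear_combination hyp - (Real.pi * (a * starRingEnd ℂ a) * b * A * B) * hAC
  rw [show e + D + m + n = n + (e + D) + m by omega, show e + D + n + m - (n + D) = e + m by omega,
    show n + D + (e + D) + m + t - n = t + (e + D + D) + m by omega,
    show n + D + (e + D) + m - n = e + D + D + m by omega]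
  rw [hA, hB, hC, hB'] at key
  have h1 := hf (e + m)
  have h2 := hf (e + D + m)
  have h3 := hf (e + D + D + m)
  have hfinal : ((t + (e + D) + m).factorial : ℂ) * ((n + (e + D) + m).factorial : ℂ) ^ 2
        / (((e + D + m).factorial : ℂ) * ((e + m).factorial : ℂ)) =
      ((n + D + (e + D) + m).factorial : ℂ) ^ 2 * ((t + (e + D + D) + m).factorial : ℂ)
        / ((e + D + D + m).factorial : ℂ) ^ 2 := by
    field_simp at key ⊢
    linear_combination -key
  apply Complex.ofReal_injective
  push_cast
  exact hfinal
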